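/- Set N = 1 + h and let ℂ[P/NP] be the permutation representation of W on the finite set P/NP. Then the sign character of W occurs in ℂ[P/NP] with multiplicity exactly one; that is, the subspace {v ∈ ℂ[P/NP] : w·v = sgn(w)·v for all w ∈ W} is one-dimensional, where sgn(w) = det(w). -/

import Mathlib

noncomputable section

open scoped RealInnerProductSpace BigOperators

/-- Euclidean space `ℝ^n`, the ambient space of the root system. -/
abbrev Vn (n : ℕ) := EuclideanSpace ℝ (Fin n)

/-- The coroot `α^∨ = 2α/(α,α)` of a vector `α`. -/
def coroot {n : ℕ} (α : Vn n) : Vn n := (2 / ⟪α, α⟫) • α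

/-- The reflection `s_α` applied to `β`: `β − (β, α^∨)·α`. -/
def reflVec {n : ℕ} (α β : Vn n) : Vn n := β - (2 * ⟪β, α⟫ / ⟪α, α⟫) • α

/-- An irreducible reduced crystallographic root system of rank `n` in `ℝ^n`, together
with a fixed base of simple roots `α_1,…,α_n`, the corresponding set of positive roots,
the fundamental weights `ω_1,…,ω_n` and the highest short root `θ`. -/
structure RootSystemData (n : ℕ) where
  /-- the set of roots -/
  R : Finset (Vn n)
  /-- the set of positive roots -/
  Rplus : Finset (Vn n)
  /-- the simple roots `α_1,…,α_n` -/
  sroot : Fin n → Vn n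
  /-- the fundamental weights `ω_1,…,ω_n` -/
  fw : Fin n → Vn n
  /-- the highest short root `θ` -/
  hst : Vn n
  root_ne_zero : ∀ α ∈ R, α ≠ (0 : Vn n)
  span_top : Submodule.span ℝ (R : Set (Vn n)) = ⊤
  reflect_mem : ∀ α ∈ R, ∀ β ∈ R, reflVec α β ∈ R
  crystallographic : ∀ α ∈ R, ∀ β ∈ R, ∃ z : ℤ, 2 * ⟪β, α⟫ / ⟪α, α⟫ = (z : ℝ)
  reduced : ∀ α ∈ R, ∀ c : ℝ, c • α ∈ R → c = 1 ∨ c = -1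
  irreducible : ∀ S : Set (Vn n), (∃ α ∈ R, α ∈ S) →
    (∀ α ∈ R, ∀ β ∈ R, α ∈ S → ⟪α, β⟫ ≠ 0 → β ∈ S) → ∀ β ∈ R, β ∈ S
  sroot_mem : ∀ i, sroot i ∈ Rplus
  pos_sub : Rplus ⊆ R
  pos_or : ∀ α ∈ R, α ∈ Rplus ∨ -α ∈ Rplus
  pos_not_and : ∀ α ∈ Rplus, -α ∉ Rplus
  pos_decomp : ∀ α ∈ Rplus, ∃ c : Fin n → ℕ, α = ∑ i, (c i : ℝ) • sroot i
  fw_pair : ∀ i j, ⟪fw i, coroot (sroot j)⟫ = if i = j then 1 else 0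
  theta_mem : hst ∈ Rplus
  theta_short : ∀ α ∈ R, ⟪hst, hst⟫ ≤ ⟪α, α⟫
  theta_highest : ∀ α ∈ R, ∃ c : Fin n → ℝ, (∀ i, 0 ≤ c i) ∧
    coroot hst - coroot α = ∑ i, c i • coroot (sroot i)

namespace RootSystemData

variable {n : ℕ} (D : RootSystemData n)

/-- The weight lattice `P = ⊕_i ℤ·ω_i`. -/
def P : Submodule ℤ (Vn n) := Submodule.span ℤ (Set.range D.fw)

/-- `ρ = ω_1 + ⋯ + ω_n` (the half-sum of the positive roots). -/
def rho : Vn n := ∑ i, D.fw i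

/-- The Coxeter number `h = 1 + (ρ, θ^∨)`. -/
def h : ℝ := 1 + ⟪D.rho, coroot D.hst⟫

/-- The Weyl group `W`, as the subgroup of `GL(ℝ^n)` generated by the reflections
`s_α`, `α ∈ R`. -/
def Weyl : Subgroup ((Vn n) ≃ₗ[ℝ] (Vn n)) :=
  Subgroup.closure { w | ∃ α ∈ D.R, ∀ v, w v = reflVec α v }

/-- `ω_r` is a minuscule (fundamental) weight: `(ω_r, α^∨) ≤ 1` for all `α ∈ R_+`. -/
def Minuscule (r : Fin n) : Prop := ∀ α ∈ D.Rplus, ⟪D.fw r, coroot α⟫ ≤ 1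

end RootSystemData

/-- The submodule `N·P` of the weight lattice `P`. -/
def NPsub {n : ℕ} (D : RootSystemData n) (N : ℤ) : Submodule ℤ ↥D.P :=
  LinearMap.range (N • (LinearMap.id : ↥D.P →ₗ[ℤ] ↥D.P))

/-- The finite abelian group `P/NP`. -/
abbrev Qmod {n : ℕ} (D : RootSystemData n) (N : ℤ) := ↥D.P ⧸ NPsub D N

/-- `f ∈ ℂ[P/NP]` transforms according to the sign character of `W`:
`f(w·x) = det(w)·f(x)` for every `w ∈ W` (the action of `w` on `P/NP` being induced by
any lift `wP : P → P` of `w`). -/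
def IsSignVector {n : ℕ} (D : RootSystemData n) (N : ℤ) (f : Qmod D N →₀ ℂ) : Prop :=
  ∀ w ∈ D.Weyl, ∀ wP : ↥D.P →ₗ[ℤ] ↥D.P, (∀ p : ↥D.P, ((wP p : Vn n)) = w ↑p) →
    ∀ x : ↥D.P, f (Submodule.Quotient.mk (wP x)) =
      ((LinearMap.det (w : Vn n →ₗ[ℝ] Vn n) : ℝ) : ℂ) * f (Submodule.Quotient.mk x)

/-!
The function `F(x) = ∏_{α > 0} sin (π h (x, α^∨) / N)` is antiinvariant under `W`. The Coxeter
number maps `P` into the root lattice `Q`, because `∑_{α > 0} (x, α^∨) α` is `W`-equivariant, hence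
equals `h x`, and the number of sign changes of `F` under a translation by `N p`, `p ∈ P`, is even.
So `F` is a sign vector on `P/NP`. As `h ≡ -1` modulo `N` and `0 < (ρ, α^∨) < N`, it does not
vanish at `ρ`.

Conversely, let a sign vector vanish at `ρ`. Since `N - 1 = h`, every class modulo `NP` meets
`ρ + Q`. If `f ≠ 0`, choose `y ∈ ρ + Q` with `f(y) ≠ 0` as near to `ρ` as possible. As `f` changes
sign under the reflections in the hyperplanes `(x, α^∨) = k N`, the point `y` lies on none of them,
and none of them separates it from `ρ`; so `y` lies in the open alcove
`(y, α_i^∨) > 0, (y, θ^∨) < N`. Then `y - ρ ∈ Q` is dominant with `(y - ρ, θ^∨) ≤ 1`, and zero is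
the only such element of `Q`. Thus `y = ρ`, a contradiction.
-/

section Reflection

variable {n : ℕ}

/-- The reflection `s_α`, as a linear isometry of the ambient space. -/
def reflIso (α : Vn n) : Vn n ≃ₗᵢ[ℝ] Vn n := (ℝ ∙ α)ᗮ.reflection

theorem inner_coroot (x α : Vn n) : ⟪x, coroot α⟫ = 2 * ⟪x, α⟫ / ⟪α, α⟫ := by
  rw [coroot, real_inner_smul_right, div_mul_eq_mul_div]

theorem inner_coroot_mul_inner_self (x α : Vn n) : ⟪x, coroot α⟫ * ⟪α, α⟫ = 2 * ⟪x, α⟫ := by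
  rcases eq_or_ne α 0 with rfl | hα
  · simp only [inner_zero_right, mul_zero]
  · rw [inner_coroot, div_mul_cancel₀ _ (inner_self_ne_zero.mpr hα)]

theorem inner_coroot_self {α : Vn n} (hα : α ≠ 0) : ⟪α, coroot α⟫ = 2 := by
  rw [inner_coroot, mul_div_cancel_right₀ _ (inner_self_ne_zero.mpr hα)]

theorem inner_coroot_pos_iff {x α : Vn n} (hα : α ≠ 0) : 0 < ⟪x, coroot α⟫ ↔ 0 < ⟪x, α⟫ := by
  rw [inner_coroot, div_pos_iff_of_pos_right (real_inner_self_pos.mpr hα),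
    mul_pos_iff_of_pos_left two_pos]

@[simp]
theorem coroot_neg (α : Vn n) : coroot (-α) = -coroot α := by
  simp only [coroot, inner_neg_neg, smul_neg]

theorem coroot_map (e : Vn n ≃ₗᵢ[ℝ] Vn n) (α : Vn n) : coroot (e α) = e (coroot α) := by
  simp only [coroot, LinearIsometryEquiv.inner_map_map, map_smul]

theorem coroot_coroot (α : Vn n) : coroot (coroot α) = α := by
  rcases eq_or_ne α 0 with rfl | hα
  · simp only [coroot, smul_zero]
  · have hα' : ⟪α, α⟫ ≠ 0 := inner_self_ne_zero.mpr hα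
    simp only [coroot, real_inner_smul_left, real_inner_smul_right, smul_smul]
    field_simp
    exact one_smul ℝ α

theorem reflIso_apply (α x : Vn n) : reflIso α x = x - ⟪x, coroot α⟫ • α := by
  have hnorm : ((‖α‖ : ℝ) ^ 2) = ⟪α, α⟫ := (real_inner_self_eq_norm_sq α).symm
  rw [reflIso, Submodule.reflection_orthogonal_apply, Submodule.reflection_singleton_apply,
    inner_coroot, real_inner_comm, RCLike.ofReal_real_eq_id, id, hnorm]
  module

theorem reflVec_eq_reflIso (α x : Vn n) : reflVec α x = reflIso α x := by
  rw [reflIso_apply, reflVec, inner_coroot]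

@[simp]
theorem reflIso_reflIso (α x : Vn n) : reflIso α (reflIso α x) = x :=
  Submodule.reflection_reflection _ x

theorem reflIso_self (α : Vn n) : reflIso α α = -α :=
  Submodule.reflection_orthogonalComplement_singleton_eq_neg α

theorem reflIso_neg (α : Vn n) : reflIso (-α) = reflIso α := by
  ext1 x
  simp only [reflIso_apply, coroot_neg, inner_neg_right, smul_neg, neg_smul, neg_neg]

theorem inner_reflIso_left (α x y : Vn n) : ⟪reflIso α x, y⟫ = ⟪x, reflIso α y⟫ := by
  rw [← LinearIsometryEquiv.inner_map_map (reflIso α) x, reflIso_reflIso]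

theorem inner_reflIso_coroot (α β x : Vn n) :
    ⟪reflIso α x, coroot β⟫ = ⟪x, coroot (reflIso α β)⟫ := by
  rw [coroot_map, inner_reflIso_left]

theorem inner_smul_coroot (α x : Vn n) : ⟪α, x⟫ • coroot α = ⟪x, coroot α⟫ • α := by
  rw [inner_coroot, coroot, smul_smul, real_inner_comm, mul_div_assoc', mul_comm]

theorem reflIso_map (e : Vn n ≃ₗᵢ[ℝ] Vn n) (α x : Vn n) :
    reflIso (e α) x = e (reflIso α (e.symm x)) := by
  rw [reflIso_apply, reflIso_apply, coroot_map, map_sub, map_smul, e.apply_symm_apply,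
    ← e.inner_map_map (e.symm x), e.apply_symm_apply]

theorem mul_nonneg_of_norm_sub_le_norm_reflIso {α x y : Vn n} (hα : α ≠ 0) {m : ℝ}
    (h : ‖y - x‖ ≤ ‖reflIso α y + m • α - x‖) :
    0 ≤ (⟪y, coroot α⟫ - m) * (⟪x, coroot α⟫ - m) := by
  have hvec : reflIso α y + m • α - x = y - x - (⟪y, coroot α⟫ - m) • α := by
    rw [reflIso_apply]
    module
  have hsq := pow_le_pow_left₀ (norm_nonneg _) h 2
  rw [hvec, norm_sub_sq_real (y - x), real_inner_smul_right, norm_smul, mul_pow,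
    ← real_inner_self_eq_norm_sq α, Real.norm_eq_abs, sq_abs, inner_sub_left] at hsq
  refine nonneg_of_mul_nonneg_left ?_ (real_inner_self_pos.mpr hα)
  linear_combination hsq + (⟪y, coroot α⟫ - m) *
    (inner_coroot_mul_inner_self y α - inner_coroot_mul_inner_self x α)

theorem det_reflIso {α : Vn n} (hα : α ≠ 0) :
    LinearMap.det ((reflIso α).toLinearEquiv : Vn n →ₗ[ℝ] Vn n) = -1 := by
  rw [reflIso, Submodule.det_reflection, Submodule.orthogonal_orthogonal,
    finrank_span_singleton hα, pow_one]

end Reflection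

theorem prod_sin_add_int_mul_pi {ι : Type*} (s : Finset ι) (f : ι → ℝ) (k : ι → ℤ) :
    ∏ i ∈ s, Real.sin (f i + k i * Real.pi) = (-1) ^ (∑ i ∈ s, k i) * ∏ i ∈ s, Real.sin (f i) := by
  simp only [Real.sin_add_int_mul_pi, Finset.prod_mul_distrib]
  congr 1
  induction s using Finset.cons_induction with
  | empty => simp
  | cons a s ha ih => rw [Finset.prod_cons, Finset.sum_cons, ih, zpow_add₀ (by norm_num)]

namespace RootSystemData

variable {n : ℕ} (D : RootSystemData n)

section RootPairing

variable {D}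

theorem ne_zero_of_mem {α : Vn n} (hα : α ∈ D.R) : α ≠ 0 := D.root_ne_zero α hα

theorem reflIso_mem {α β : Vn n} (hα : α ∈ D.R) (hβ : β ∈ D.R) : reflIso α β ∈ D.R :=
  reflVec_eq_reflIso α β ▸ D.reflect_mem α hα β hβ

theorem neg_mem {α : Vn n} (hα : α ∈ D.R) : -α ∈ D.R := reflIso_self α ▸ reflIso_mem hα hα

variable (D)

instance : (innerₗ (Vn n)).IsPerfPair :=
  .of_injective (injective_iff_map_eq_zero _ |>.mpr fun x hx ↦
      inner_self_eq_zero.mp <| congr($hx x))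
    (injective_iff_map_eq_zero _ |>.mpr fun x hx ↦ inner_self_eq_zero.mp <| congr($hx x))

/-- The roots and coroots of `D`, bundled as a root pairing of the ambient space with itself. -/
def rootPairing : RootPairing D.R ℝ (Vn n) (Vn n) where
  toLinearMap := innerₗ (Vn n)
  root := .subtype _
  coroot := ⟨fun α ↦ coroot α.1, fun α β h ↦ Subtype.ext <| by
    rw [← coroot_coroot α.1, ← coroot_coroot β.1]; exact congrArg coroot h⟩
  root_coroot_two α := inner_coroot_self (ne_zero_of_mem α.2)
  reflectionPerm α := Function.Involutive.toPerm (fun β ↦ ⟨reflIso α.1 β.1, reflIso_mem α.2 β.2⟩)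
    fun β ↦ Subtype.ext (reflIso_reflIso α.1 β.1)
  reflectionPerm_root α β := (reflIso_apply α.1 β.1).symm
  reflectionPerm_coroot α β := by
    change coroot β.1 - ⟪α.1, coroot β.1⟫ • coroot α.1 = coroot (reflIso α.1 β.1)
    rw [coroot_map, reflIso_apply, inner_smul_coroot]

theorem rootPairing_pairing (α β : D.R) : D.rootPairing.pairing α β = ⟪α.1, coroot β.1⟫ := rfl

theorem coe_reflectionPerm (α β : D.R) :
    (D.rootPairing.reflectionPerm α β : Vn n) = reflIso α.1 β.1 := rfl

theorem exists_int_eq_pairing (α β : D.R) : ∃ z : ℤ, (z : ℝ) = ⟪α.1, coroot β.1⟫ := by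
  obtain ⟨z, hz⟩ := D.crystallographic β β.2 α α.2
  exact ⟨z, by rw [inner_coroot, hz]⟩

instance : D.rootPairing.IsCrystallographic := ⟨D.exists_int_eq_pairing⟩

theorem span_range_root : Submodule.span ℝ (Set.range D.rootPairing.root) = ⊤ := by
  rw [← D.span_top]
  exact congrArg _ Subtype.range_coe

instance : D.rootPairing.IsRootSystem :=
  ⟨D.span_range_root, D.rootPairing.rootSpan_eq_top_iff.mp D.span_range_root⟩

instance : D.rootPairing.IsReduced := by
  refine ⟨fun α β hli ↦ ?_⟩
  rw [LinearIndependent.pair_iff' (D.rootPairing.ne_zero α)] at hli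
  push Not at hli
  obtain ⟨c, hc⟩ := hli
  rcases D.reduced α α.2 c (hc ▸ β.2 : c • α.1 ∈ D.R) with rfl | rfl
  · exact .inl (by rw [← hc, one_smul])
  · exact .inr (by rw [← hc, neg_one_smul, neg_neg])

theorem add_mem_of_inner_neg {D : RootSystemData n} {α β : Vn n} (hα : α ∈ D.R) (hβ : β ∈ D.R)
    (hne : α ≠ -β) (hneg : ⟪α, β⟫ < 0) : α + β ∈ D.R := by
  have hpair : D.rootPairing.pairingIn ℤ ⟨α, hα⟩ ⟨β, hβ⟩ < 0 := by
    rw [← Int.cast_lt (R := ℝ), ← eq_intCast (algebraMap ℤ ℝ),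
      RootPairing.algebraMap_pairingIn, Int.cast_zero, rootPairing_pairing, inner_coroot]
    exact div_neg_of_neg_of_pos (by linarith)
      (real_inner_self_pos.mpr (ne_zero_of_mem hβ))
  obtain ⟨γ, hγ⟩ := D.rootPairing.root_add_root_mem_of_pairingIn_neg hpair hne
  exact hγ ▸ γ.2

end RootPairing

section SimpleRoots

theorem sroot_mem_R (i : Fin n) : D.sroot i ∈ D.R := D.pos_sub (D.sroot_mem i)

theorem sroot_ne_zero (i : Fin n) : D.sroot i ≠ 0 := D.root_ne_zero _ (D.sroot_mem_R i)

theorem inner_fw_sroot (i j : Fin n) :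
    ⟪D.fw i, D.sroot j⟫ = if i = j then ⟪D.sroot j, D.sroot j⟫ / 2 else 0 := by
  have h := inner_coroot_mul_inner_self (D.fw i) (D.sroot j)
  rw [D.fw_pair] at h
  split_ifs at h ⊢ <;> linarith

theorem linearIndependent_fw : LinearIndependent ℝ D.fw :=
  .of_pairwise_dual_eq_zero_one _ (fun i ↦ innerₗ (Vn n) (coroot (D.sroot i)))
    (fun i j hij ↦ (real_inner_comm _ _).trans (by rw [D.fw_pair, if_neg hij.symm]))
    (fun i ↦ (real_inner_comm _ _).trans ((D.fw_pair i i).trans (if_pos rfl)))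

theorem linearIndependent_sroot : LinearIndependent ℝ D.sroot := by
  refine .of_pairwise_dual_eq_zero_one _
    (fun i ↦ (2 / ⟪D.sroot i, D.sroot i⟫) • innerₗ (Vn n) (D.fw i)) (fun i j hij ↦ ?_) fun i ↦ ?_
  · simp [D.inner_fw_sroot, hij]
  · have := inner_self_ne_zero (𝕜 := ℝ).mpr (D.sroot_ne_zero i)
    simp only [LinearMap.smul_apply, innerₗ_apply_apply, D.inner_fw_sroot, if_true, smul_eq_mul]
    field_simp

theorem sum_inner_coroot_smul_fw (x : Vn n) : ∑ i, ⟪x, coroot (D.sroot i)⟫ • D.fw i = x := by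
  have hx : x ∈ Submodule.span ℝ (Set.range D.fw) := by
    rw [D.linearIndependent_fw.span_eq_top_of_card_eq_finrank' (by simp)]
    trivial
  obtain ⟨c, rfl⟩ := Submodule.mem_span_range_iff_exists_fun ℝ |>.mp hx
  simp only [sum_inner, real_inner_smul_left, D.fw_pair, mul_ite, mul_one, mul_zero,
    Finset.sum_ite_eq', Finset.mem_univ, if_true]

theorem ext_inner_coroot {x y : Vn n}
    (hxy : ∀ i, ⟪x, coroot (D.sroot i)⟫ = ⟪y, coroot (D.sroot i)⟫) : x = y := by
  rw [← D.sum_inner_coroot_smul_fw x, ← D.sum_inner_coroot_smul_fw y]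
  simp only [hxy]

/-- The index of the simple root `α_i` in the root pairing attached to `D`. -/
def simpleIndex (i : Fin n) : D.R := ⟨D.sroot i, D.sroot_mem_R i⟩

theorem simpleIndex_injective : Function.Injective D.simpleIndex := fun _ _ hij ↦
  D.linearIndependent_sroot.injective (congrArg Subtype.val hij)

theorem range_root_simpleIndex :
    D.rootPairing.root '' Set.range D.simpleIndex = Set.range D.sroot :=
  (Set.range_comp _ _).symm

variable {D} in
theorem mem_closure_sroot {α : Vn n} (hα : α ∈ D.Rplus) :
    α ∈ AddSubmonoid.closure (Set.range D.sroot) := by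
  obtain ⟨c, rfl⟩ := D.pos_decomp α hα
  refine sum_mem fun i _ ↦ ?_
  rw [Nat.cast_smul_eq_nsmul]
  exact nsmul_mem (AddSubmonoid.subset_closure (Set.mem_range_self i)) _

/-- The simple roots, as a base of the root pairing attached to `D`. -/
def base : D.rootPairing.Base :=
  .mk' (P := D.rootPairing) (Set.range D.simpleIndex)
    ((linearIndepOn_range_iff D.simpleIndex_injective _).mpr D.linearIndependent_sroot)
    fun α ↦ by
      rw [range_root_simpleIndex]
      exact (D.pos_or α α.2).imp mem_closure_sroot mem_closure_sroot

theorem mem_base_support {α : D.R} : α ∈ D.base.support ↔ ∃ i, D.simpleIndex i = α := by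
  rw [base, RootPairing.Base.mk', Set.Finite.mem_toFinset, Set.mem_range]

variable {D}

theorem root_induction {p : Vn n → Prop} (neg : ∀ α ∈ D.R, p α → p (-α))
    (simple : ∀ i, p (D.sroot i))
    (reflIso : ∀ i, ∀ α ∈ D.R, p α → p (reflIso (D.sroot i) α))
    {α : Vn n} (hα : α ∈ D.R) : p α := by
  refine D.base.induction_reflect (p := fun β : D.R ↦ p β) ⟨α, hα⟩ (fun β hβ ↦ ?_)
    (fun β hβ ↦ ?_) fun β γ hβ hγ ↦ ?_
  · rw [coe_reflectionPerm, reflIso_self]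
    exact neg β β.2 hβ
  · obtain ⟨i, rfl⟩ := D.mem_base_support.mp hβ
    exact simple i
  · obtain ⟨i, rfl⟩ := D.mem_base_support.mp hγ
    exact reflIso i β β.2 hβ

end SimpleRoots

section Lattices

variable {D}

theorem mem_P_iff {x : Vn n} : x ∈ D.P ↔ ∀ i, ∃ z : ℤ, ⟪x, coroot (D.sroot i)⟫ = z := by
  refine ⟨fun hx i ↦ ?_, fun hx ↦ ?_⟩
  · obtain ⟨c, rfl⟩ := Submodule.mem_span_range_iff_exists_fun ℤ |>.mp hx
    exact ⟨c i, by
      simp [sum_inner, ← Int.cast_smul_eq_zsmul ℝ, real_inner_smul_left, D.fw_pair]⟩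
  · choose z hz using hx
    rw [← D.sum_inner_coroot_smul_fw x]
    refine sum_mem fun i _ ↦ ?_
    rw [hz, Int.cast_smul_eq_zsmul]
    exact D.P.smul_mem _ (Submodule.subset_span (Set.mem_range_self i))

theorem mem_P_of_mem_R {α : Vn n} (hα : α ∈ D.R) : α ∈ D.P :=
  mem_P_iff.mpr fun i ↦ (D.exists_int_eq_pairing ⟨α, hα⟩ (D.simpleIndex i)).imp fun _ ↦ Eq.symm

theorem exists_int_inner_coroot {x : Vn n} (hx : x ∈ D.P) {α : Vn n} (hα : α ∈ D.R) :
    ∃ z : ℤ, ⟪x, coroot α⟫ = z := by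
  refine root_induction (p := fun α ↦ ∀ x ∈ D.P, ∃ z : ℤ, ⟪x, coroot α⟫ = z)
    (fun α _ h x hx ↦ ?_) (fun i x hx ↦ mem_P_iff.mp hx i) (fun i α _ h x hx ↦ ?_) hα x hx
  · obtain ⟨z, hz⟩ := h x hx
    exact ⟨-z, by rw [coroot_neg, inner_neg_right, hz, Int.cast_neg]⟩
  · rw [← inner_reflIso_coroot]
    refine h _ ?_
    obtain ⟨z, hz⟩ := mem_P_iff.mp hx i
    rw [reflIso_apply, hz, Int.cast_smul_eq_zsmul]
    exact sub_mem hx (zsmul_mem (mem_P_of_mem_R (D.sroot_mem_R i)) z)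

variable (D) in
/-- The root lattice `Q`, spanned over `ℤ` by the roots. -/
def rootLattice : Submodule ℤ (Vn n) := Submodule.span ℤ D.R

theorem mem_rootLattice_of_mem_R {α : Vn n} (hα : α ∈ D.R) : α ∈ D.rootLattice :=
  Submodule.subset_span hα

theorem rootLattice_le_P : D.rootLattice ≤ D.P :=
  Submodule.span_le.mpr fun _ ↦ mem_P_of_mem_R

theorem inner_coroot_smul_mem_rootLattice {x α : Vn n} (hx : x ∈ D.P) (hα : α ∈ D.R) :
    ⟪x, coroot α⟫ • α ∈ D.rootLattice := by
  obtain ⟨z, hz⟩ := exists_int_inner_coroot hx hα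
  rw [hz, Int.cast_smul_eq_zsmul]
  exact zsmul_mem (mem_rootLattice_of_mem_R hα) z

theorem reflIso_mem_P {x α : Vn n} (hx : x ∈ D.P) (hα : α ∈ D.R) : reflIso α x ∈ D.P := by
  rw [reflIso_apply]
  exact sub_mem hx (rootLattice_le_P (inner_coroot_smul_mem_rootLattice hx hα))

/-- The restriction of `s_α` to the weight lattice. -/
def reflP {α : Vn n} (hα : α ∈ D.R) : D.P →ₗ[ℤ] D.P :=
  ((reflIso α).toLinearMap.restrictScalars ℤ).restrict fun _ hx ↦ reflIso_mem_P hx hα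

end Lattices

section PositiveRoots

variable {D}

theorem mem_R_of_pos {α : Vn n} (hα : α ∈ D.Rplus) : α ∈ D.R := D.pos_sub hα

theorem ne_zero_of_pos {α : Vn n} (hα : α ∈ D.Rplus) : α ≠ 0 := ne_zero_of_mem (D.pos_sub hα)

theorem inner_nonneg_of_pos {x α : Vn n} (hx : ∀ i, 0 ≤ ⟪x, D.sroot i⟫) (hα : α ∈ D.Rplus) :
    0 ≤ ⟪x, α⟫ := by
  obtain ⟨c, rfl⟩ := D.pos_decomp α hα
  simp only [inner_sum, real_inner_smul_right]
  exact Finset.sum_nonneg fun i _ ↦ mul_nonneg (Nat.cast_nonneg _) (hx i)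

theorem inner_fw_nonneg (i : Fin n) {α : Vn n} (hα : α ∈ D.Rplus) : 0 ≤ ⟪D.fw i, α⟫ := by
  refine inner_nonneg_of_pos (fun j ↦ ?_) hα
  rw [inner_fw_sroot]
  split_ifs
  exacts [div_nonneg real_inner_self_nonneg zero_le_two, le_rfl]

theorem pos_of_inner_fw_pos {i : Fin n} {α : Vn n} (hα : α ∈ D.R) (hi : 0 < ⟪D.fw i, α⟫) :
    α ∈ D.Rplus := by
  refine (D.pos_or α hα).resolve_right fun hneg ↦ hi.not_ge ?_
  simpa only [inner_neg_right, neg_nonneg] using inner_fw_nonneg i hneg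

theorem exists_inner_fw_pos_of_ne_sroot {α : Vn n} {i : Fin n} (hα : α ∈ D.Rplus)
    (hne : α ≠ D.sroot i) : ∃ j ≠ i, 0 < ⟪D.fw j, α⟫ := by
  by_contra! hle
  obtain ⟨c, hc⟩ := D.pos_decomp α hα
  have hmul : α = (c i : ℝ) • D.sroot i := by
    rw [hc]
    refine Finset.sum_eq_single_of_mem i (Finset.mem_univ i) fun j _ hji ↦ ?_
    have hj : ⟪D.fw j, α⟫ = c j * (⟪D.sroot j, D.sroot j⟫ / 2) := by
      conv_lhs => rw [hc]
      simp [inner_sum, real_inner_smul_right, inner_fw_sroot]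
    have hpos : 0 < ⟪D.sroot j, D.sroot j⟫ / 2 :=
      half_pos (real_inner_self_pos.mpr (D.sroot_ne_zero j))
    have hcj : (c j : ℝ) ≤ 0 := nonpos_of_mul_nonpos_left (hj ▸ hle j hji) hpos
    rw [le_antisymm hcj (Nat.cast_nonneg _), zero_smul]
  rcases D.reduced _ (D.sroot_mem_R i) (c i) (hmul ▸ mem_R_of_pos hα) with h1 | h1
  · exact hne (by rw [hmul, h1, one_smul])
  · exact (h1 ▸ Nat.cast_nonneg (α := ℝ) (c i)).not_gt neg_one_lt_zero

theorem reflIso_sroot_mem_erase (i : Fin n) {α : Vn n}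
    (hα : α ∈ D.Rplus.erase (D.sroot i)) :
    reflIso (D.sroot i) α ∈ D.Rplus.erase (D.sroot i) := by
  obtain ⟨hne, hα⟩ := Finset.mem_erase.mp hα
  obtain ⟨j, hji, hj⟩ := exists_inner_fw_pos_of_ne_sroot hα hne
  refine Finset.mem_erase.mpr ⟨fun h ↦ D.pos_not_and α hα ?_, pos_of_inner_fw_pos (i := j) ?_ ?_⟩
  · rw [← reflIso_reflIso (D.sroot i) α, h, reflIso_self, neg_neg]
    exact D.sroot_mem i
  · exact reflIso_mem (D.sroot_mem_R i) (mem_R_of_pos hα)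
  · rwa [reflIso_apply, inner_sub_right, real_inner_smul_right, inner_fw_sroot, if_neg hji,
      mul_zero, sub_zero]

@[to_additive]
theorem prod_reflIso_sroot {M : Type*} [CommMonoid M] (i : Fin n) (f : Vn n → M) :
    ∏ α ∈ D.Rplus, f (reflIso (D.sroot i) α) =
      f (-D.sroot i) * ∏ α ∈ D.Rplus.erase (D.sroot i), f α := by
  rw [← Finset.mul_prod_erase _ _ (D.sroot_mem i), reflIso_self]
  congr 1
  exact Finset.prod_nbij' (reflIso (D.sroot i)) (reflIso (D.sroot i))
    (fun _ ↦ reflIso_sroot_mem_erase i) (fun _ ↦ reflIso_sroot_mem_erase i)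
    (fun _ _ ↦ reflIso_reflIso _ _) (fun _ _ ↦ reflIso_reflIso _ _) fun _ _ ↦ rfl

theorem sum_pos_eq_of_odd (i : Fin n) {f : Vn n → ℝ}
    (hf : ∀ α, f (reflIso (D.sroot i) α) = -f α) : ∑ α ∈ D.Rplus, f α = f (D.sroot i) := by
  have hsum := sum_reflIso_sroot (D := D) i f
  have hsplit := Finset.add_sum_erase _ f (D.sroot_mem i)
  have hneg := hf (D.sroot i)
  rw [reflIso_self] at hneg
  simp only [hf, Finset.sum_neg_distrib] at hsum
  linarith

theorem sum_pos_reflIso_of_even {M : Type*} [AddCommMonoid M] (i : Fin n) {f : Vn n → M}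
    (hf : ∀ α, f (-α) = f α) :
    ∑ α ∈ D.Rplus, f (reflIso (D.sroot i) α) = ∑ α ∈ D.Rplus, f α := by
  rw [sum_reflIso_sroot, hf, Finset.add_sum_erase _ f (D.sroot_mem i)]

end PositiveRoots

section HalfSum

theorem inner_rho_coroot_sroot (i : Fin n) : ⟪D.rho, coroot (D.sroot i)⟫ = 1 := by
  simp only [rho, sum_inner, D.fw_pair, Finset.sum_ite_eq', Finset.mem_univ, if_true]

theorem rho_mem_P : D.rho ∈ D.P := sum_mem fun i _ ↦ Submodule.subset_span (Set.mem_range_self i)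

theorem sum_pos_eq_two_rho : ∑ α ∈ D.Rplus, α = (2 : ℝ) • D.rho := by
  refine D.ext_inner_coroot fun i ↦ ?_
  rw [sum_inner, real_inner_smul_left, inner_rho_coroot_sroot, mul_one,
    ← inner_coroot_self (D.sroot_ne_zero i)]
  refine sum_pos_eq_of_odd i (f := fun α ↦ ⟪α, coroot (D.sroot i)⟫) fun α ↦ ?_
  rw [inner_reflIso_coroot, reflIso_self, coroot_neg, inner_neg_right]

theorem sum_pos_inner_sroot_coroot (i : Fin n) :
    ∑ α ∈ D.Rplus, ⟪D.sroot i, coroot α⟫ = 2 := by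
  rw [← inner_coroot_self (D.sroot_ne_zero i)]
  refine sum_pos_eq_of_odd i (f := fun α ↦ ⟪D.sroot i, coroot α⟫) fun α ↦ ?_
  rw [← inner_reflIso_coroot, reflIso_self, inner_neg_left]

theorem rootLattice_le_span_sroot : D.rootLattice ≤ Submodule.span ℤ (Set.range D.sroot) := by
  have hpos {α : Vn n} (hα : α ∈ D.Rplus) : α ∈ Submodule.span ℤ (Set.range D.sroot) :=
    (AddSubmonoid.closure_le (S := (Submodule.span ℤ (Set.range D.sroot)).toAddSubmonoid)).mpr
      Submodule.subset_span (mem_closure_sroot hα)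
  refine Submodule.span_le.mpr fun α hα ↦ ?_
  rcases D.pos_or α hα with h | h
  · exact hpos h
  · exact neg_mem_iff.mp (hpos h)

variable {D}

theorem exists_int_sum_pos_inner_coroot_eq_two_mul {q : Vn n} (hq : q ∈ D.rootLattice) :
    ∃ z : ℤ, ∑ α ∈ D.Rplus, ⟪q, coroot α⟫ = 2 * z := by
  obtain ⟨c, rfl⟩ := Submodule.mem_span_range_iff_exists_fun ℤ |>.mp
    (D.rootLattice_le_span_sroot hq)
  refine ⟨∑ i, c i, ?_⟩
  simp only [sum_inner, ← Int.cast_smul_eq_zsmul ℝ, real_inner_smul_left]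
  rw [Finset.sum_comm]
  simp only [← Finset.mul_sum, sum_pos_inner_sroot_coroot, ← Finset.sum_mul, mul_comm,
    Int.cast_sum]

end HalfSum

section HighestShortRoot

variable {D}

theorem hst_mem_R : D.hst ∈ D.R := D.pos_sub D.theta_mem

theorem inner_coroot_pos_of_pos {x α : Vn n} (hx : ∀ i, 0 < ⟪x, coroot (D.sroot i)⟫)
    (hα : α ∈ D.Rplus) : 0 < ⟪x, coroot α⟫ := by
  rw [inner_coroot_pos_iff (ne_zero_of_pos hα)]
  simp only [inner_coroot_pos_iff (D.sroot_ne_zero _)] at hx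
  obtain ⟨c, rfl⟩ := D.pos_decomp α hα
  obtain ⟨i, hi⟩ : ∃ i, c i ≠ 0 := by
    by_contra! hzero
    exact ne_zero_of_pos hα (by simp [hzero])
  simp only [inner_sum, real_inner_smul_right]
  exact Finset.sum_pos' (fun j _ ↦ mul_nonneg (Nat.cast_nonneg _) (hx j).le)
    ⟨i, Finset.mem_univ i, mul_pos (Nat.cast_pos.mpr (Nat.pos_of_ne_zero hi)) (hx i)⟩

theorem inner_rho_coroot_pos {α : Vn n} (hα : α ∈ D.Rplus) : 0 < ⟪D.rho, coroot α⟫ :=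
  inner_coroot_pos_of_pos (fun i ↦ D.inner_rho_coroot_sroot i ▸ zero_lt_one) hα

theorem inner_coroot_le_hst {x α : Vn n} (hx : ∀ i, 0 ≤ ⟪x, coroot (D.sroot i)⟫)
    (hα : α ∈ D.R) : ⟪x, coroot α⟫ ≤ ⟪x, coroot D.hst⟫ := by
  obtain ⟨c, hc0, hc⟩ := D.theta_highest α hα
  rw [← sub_nonneg, ← inner_sub_right, hc, inner_sum]
  refine Finset.sum_nonneg fun i _ ↦ ?_
  rw [real_inner_smul_right]
  exact mul_nonneg (hc0 i) (hx i)

theorem inner_sroot_coroot_hst_nonneg (i : Fin n) : 0 ≤ ⟪D.sroot i, coroot D.hst⟫ := by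
  obtain ⟨c, hc0, hc⟩ := D.theta_highest _ (reflIso_mem (D.sroot_mem_R i) hst_mem_R)
  have hpair := congrArg (fun v ↦ ⟪D.fw i, v⟫) hc
  simp only [inner_sub_right, ← inner_reflIso_coroot] at hpair
  simp only [reflIso_apply, inner_sub_left, real_inner_smul_left, inner_sum,
    real_inner_smul_right, D.fw_pair, if_true, one_mul, sub_sub_cancel, mul_ite, mul_one,
    mul_zero, Finset.sum_ite_eq, Finset.mem_univ] at hpair
  exact hpair ▸ hc0 i

theorem inner_hst_nonneg {α : Vn n} (hα : α ∈ D.Rplus) : 0 ≤ ⟪D.hst, α⟫ := by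
  refine inner_nonneg_of_pos (fun i ↦ ?_) hα
  have := inner_coroot_mul_inner_self (D.sroot i) D.hst
  rw [real_inner_comm]
  nlinarith [inner_sroot_coroot_hst_nonneg (D := D) i, real_inner_self_nonneg (x := D.hst)]

theorem inner_hst_coroot_eq_zero_or_one {α : Vn n} (hα : α ∈ D.Rplus) (hne : α ≠ D.hst) :
    ⟪D.hst, coroot α⟫ = 0 ∨ ⟪D.hst, coroot α⟫ = 1 := by
  have hαα : 0 < ⟪α, α⟫ := real_inner_self_pos.mpr (ne_zero_of_pos hα)
  have hmul := inner_coroot_mul_inner_self D.hst α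
  obtain ⟨z, hz⟩ := exists_int_inner_coroot (mem_P_of_mem_R (D := D) hst_mem_R) (mem_R_of_pos hα)
  have hnonneg : 0 ≤ z := by
    rw [hz] at hmul
    exact_mod_cast nonneg_of_mul_nonneg_left
      (hmul ▸ mul_nonneg zero_le_two (inner_hst_nonneg hα)) hαα
  have hlt : z < 2 := by
    by_contra! hge
    have hge' : (2 : ℝ) ≤ z := by exact_mod_cast hge
    refine hne (sub_eq_zero.mp <| real_inner_self_nonpos.mp ?_).symm
    rw [real_inner_sub_sub_self]
    nlinarith [D.theta_short α (mem_R_of_pos hα)]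
  rw [hz]
  obtain rfl | rfl : z = 0 ∨ z = 1 := by lia
  exacts [.inl Int.cast_zero, .inr Int.cast_one]

end HighestShortRoot

section CoxeterNumber

/-- The operator `x ↦ ∑_{α > 0} (x, α^∨) α`. It commutes with `W`, hence is a scalar by
irreducibility; the scalar is the Coxeter number. -/
def posRootOp : Vn n →ₗ[ℝ] Vn n :=
  ∑ α ∈ D.Rplus, (innerₗ (Vn n) (coroot α)).smulRight α

theorem posRootOp_apply (x : Vn n) :
    D.posRootOp x = ∑ α ∈ D.Rplus, ⟪x, coroot α⟫ • α := by
  simp only [posRootOp, LinearMap.sum_apply, LinearMap.smulRight_apply, innerₗ_apply_apply,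
    real_inner_comm]

theorem inner_posRootOp_left (x y : Vn n) : ⟪D.posRootOp x, y⟫ = ⟪x, D.posRootOp y⟫ := by
  simp only [posRootOp_apply, sum_inner, inner_sum, real_inner_smul_left, real_inner_smul_right,
    inner_coroot]
  refine Finset.sum_congr rfl fun α _ ↦ ?_
  rw [real_inner_comm y α]
  ring

theorem posRootOp_reflIso_sroot (i : Fin n) (x : Vn n) :
    D.posRootOp (reflIso (D.sroot i) x) = reflIso (D.sroot i) (D.posRootOp x) := by
  rw [posRootOp_apply, posRootOp_apply, map_sum, ← sum_pos_reflIso_of_even i fun α ↦ ?_]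
  · refine Finset.sum_congr rfl fun α _ ↦ ?_
    rw [inner_reflIso_coroot, reflIso_reflIso, map_smul]
  · rw [coroot_neg, inner_neg_right, smul_neg, neg_smul, neg_neg]

variable {D}

theorem exists_posRootOp_eq_smul {α : Vn n} (hα : α ∈ D.R) : ∃ c : ℝ, D.posRootOp α = c • α := by
  refine root_induction (p := fun α ↦ ∃ c : ℝ, D.posRootOp α = c • α)
    (fun α _ ⟨c, hc⟩ ↦ ⟨c, by rw [map_neg, hc, smul_neg]⟩) (fun i ↦ ?_)
    (fun i α _ ⟨c, hc⟩ ↦ ⟨c, by rw [posRootOp_reflIso_sroot, hc, map_smul]⟩) hα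
  have hodd := D.posRootOp_reflIso_sroot i (D.sroot i)
  rw [reflIso_self, map_neg, reflIso_apply] at hodd
  refine ⟨⟪D.posRootOp (D.sroot i), coroot (D.sroot i)⟫ / 2, ?_⟩
  linear_combination (norm := module) (-(1 / 2 : ℝ)) • hodd

theorem inner_posRootOp_hst : ⟪D.posRootOp D.hst, D.hst⟫ = D.h * ⟪D.hst, D.hst⟫ := by
  have hterm : ∀ α ∈ D.Rplus.erase D.hst, ⟪D.hst, coroot α⟫ * ⟪α, D.hst⟫ = ⟪α, D.hst⟫ := by
    intro α hα
    obtain ⟨hne, hα⟩ := Finset.mem_erase.mp hα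
    rcases inner_hst_coroot_eq_zero_or_one hα hne with h0 | h1
    · have := inner_coroot_mul_inner_self D.hst α
      rw [h0, real_inner_comm] at *
      linarith
    · rw [h1, one_mul]
  have hrho : ∑ α ∈ D.Rplus, ⟪α, D.hst⟫ = 2 * ⟪D.rho, D.hst⟫ := by
    rw [← sum_inner, sum_pos_eq_two_rho, real_inner_smul_left]
  rw [← Finset.add_sum_erase _ _ D.theta_mem] at hrho
  simp only [posRootOp_apply, sum_inner, real_inner_smul_left]
  rw [← Finset.add_sum_erase _ _ D.theta_mem, Finset.sum_congr rfl hterm,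
    inner_coroot_self (ne_zero_of_pos D.theta_mem), h, add_mul, inner_coroot_mul_inner_self]
  linarith

theorem posRootOp_eq_smul (x : Vn n) : D.posRootOp x = D.h • x := by
  obtain ⟨c, hc⟩ := exists_posRootOp_eq_smul (D := D) hst_mem_R
  have hR : ∀ β ∈ D.R, D.posRootOp β = c • β := by
    refine D.irreducible {α | D.posRootOp α = c • α} ⟨D.hst, hst_mem_R, hc⟩
      fun α _ β hβ (hαc : _ = _) hαβ ↦ ?_
    obtain ⟨d, hd⟩ := exists_posRootOp_eq_smul hβ
    have hsymm := D.inner_posRootOp_left α β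
    rw [hαc, hd, real_inner_smul_left, real_inner_smul_right] at hsymm
    exact mul_right_cancel₀ hαβ hsymm ▸ hd
  have hch : c = D.h := by
    have hθ := inner_posRootOp_hst (D := D)
    rw [hc, real_inner_smul_left] at hθ
    exact mul_right_cancel₀ (inner_self_ne_zero.mpr (ne_zero_of_pos D.theta_mem)) hθ
  have hid : D.posRootOp = D.h • LinearMap.id := LinearMap.ext_on D.span_top (hch ▸ hR)
  exact LinearMap.congr_fun hid x

theorem h_smul_mem_rootLattice {p : Vn n} (hp : p ∈ D.P) : D.h • p ∈ D.rootLattice := by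
  rw [← posRootOp_eq_smul, posRootOp_apply]
  exact sum_mem fun α hα ↦ inner_coroot_smul_mem_rootLattice hp (mem_R_of_pos hα)

end CoxeterNumber

section RootLatticeSums

variable {D}

theorem exists_multiset_sum_eq {x : Vn n} (hx : x ∈ D.rootLattice) :
    ∃ s : Multiset (Vn n), (∀ β ∈ s, β ∈ D.R) ∧ s.sum = x := by
  have hneg : (D.R : Set (Vn n)) ∪ -D.R = D.R :=
    Set.union_eq_left.mpr fun α hα ↦ neg_neg α ▸ neg_mem hα
  apply AddSubmonoid.exists_multiset_of_mem_closure
  rwa [← hneg, ← AddSubgroup.closure_toAddSubmonoid, AddSubgroup.mem_toAddSubmonoid,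
    ← Submodule.span_int_eq_addSubgroupClosure]

-- In a shortest expression no two summands have a negative product, since then their sum would be
-- zero or a root.
theorem exists_multiset_sum_eq_inner_nonneg {x : Vn n} (hx : x ∈ D.rootLattice) :
    ∃ s : Multiset (Vn n), (∀ β ∈ s, β ∈ D.R) ∧ s.sum = x ∧
      ∀ β γ t, s = β ::ₘ γ ::ₘ t → 0 ≤ ⟪γ, β⟫ := by
  obtain ⟨s, ⟨hs, rfl⟩, hmin⟩ := exists_minimalFor_of_wellFoundedLT
    (fun s : Multiset (Vn n) ↦ (∀ β ∈ s, β ∈ D.R) ∧ s.sum = x) Multiset.card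
    (exists_multiset_sum_eq hx)
  refine ⟨s, hs, rfl, ?_⟩
  rintro β γ t rfl
  obtain ⟨hβ, hγ, ht⟩ : β ∈ D.R ∧ γ ∈ D.R ∧ ∀ δ ∈ t, δ ∈ D.R := by
    simpa only [Multiset.forall_mem_cons] using hs
  by_contra! hneg
  by_cases hzero : γ = -β
  · have hcard := hmin (j := t) ⟨ht, by simp [hzero]⟩
    simp only [Multiset.card_cons] at hcard
    lia
  · have hsum := add_mem_of_inner_neg hγ hβ hzero hneg
    have hcard := hmin (j := (γ + β) ::ₘ t)
      ⟨by simpa using ⟨hsum, ht⟩, by simp [add_left_comm, add_assoc]⟩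
    simp only [Multiset.card_cons] at hcard
    lia

theorem exists_two_le_inner_coroot {x : Vn n} (hx : x ∈ D.rootLattice) (hx0 : x ≠ 0) :
    ∃ β ∈ D.R, 2 ≤ ⟪x, coroot β⟫ := by
  obtain ⟨s, hs, rfl, hpair⟩ := exists_multiset_sum_eq_inner_nonneg hx
  obtain ⟨β, hβ⟩ := Multiset.exists_mem_of_ne_zero fun h0 : s = 0 ↦ hx0 (h0 ▸ Multiset.sum_zero)
  obtain ⟨t, rfl⟩ := Multiset.exists_cons_of_mem hβ
  have ht : 0 ≤ ⟪coroot β, t.sum⟫ := by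
    rw [← innerₗ_apply_apply, map_multiset_sum]
    refine Multiset.sum_nonneg fun r hr ↦ ?_
    obtain ⟨γ, hγ, rfl⟩ := Multiset.mem_map.mp hr
    obtain ⟨u, rfl⟩ := Multiset.exists_cons_of_mem hγ
    rw [innerₗ_apply_apply, real_inner_comm, coroot, real_inner_smul_right]
    exact mul_nonneg (div_nonneg zero_le_two real_inner_self_nonneg) (hpair β γ u rfl)
  refine ⟨β, hs β hβ, ?_⟩
  rw [Multiset.sum_cons, inner_add_left, inner_coroot_self (ne_zero_of_mem (hs β hβ)),
    real_inner_comm]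
  linarith

end RootLatticeSums

section WeylSine

/-- The product `∏_{α > 0} sin (c (x, α^∨))`, which up to a constant is the Weyl denominator
evaluated at a multiple of `x`. -/
def weylSine (c : ℝ) (x : Vn n) : ℝ := ∏ α ∈ D.Rplus, Real.sin (c * ⟪x, coroot α⟫)

variable {D}

theorem weylSine_reflIso_sroot (i : Fin n) (c : ℝ) (x : Vn n) :
    D.weylSine c (reflIso (D.sroot i) x) = -D.weylSine c x := by
  simp only [weylSine, inner_reflIso_coroot]
  rw [prod_reflIso_sroot i fun α ↦ Real.sin (c * ⟪x, coroot α⟫),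
    ← Finset.mul_prod_erase _ _ (D.sroot_mem i), coroot_neg, inner_neg_right, mul_neg,
    Real.sin_neg, neg_mul]

theorem weylSine_reflIso {α : Vn n} (hα : α ∈ D.R) (c : ℝ) (x : Vn n) :
    D.weylSine c (reflIso α x) = -D.weylSine c x := by
  refine root_induction (p := fun α ↦ ∀ x, D.weylSine c (reflIso α x) = -D.weylSine c x)
    (fun α _ h x ↦ ?_) (fun i x ↦ weylSine_reflIso_sroot i c x) (fun i α _ h x ↦ ?_) hα x
  · rw [reflIso_neg, h]
  · rw [reflIso_map, weylSine_reflIso_sroot, h, ← weylSine_reflIso_sroot i,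
      LinearIsometryEquiv.apply_symm_apply]

theorem weylSine_weyl {w : Vn n ≃ₗ[ℝ] Vn n} (hw : w ∈ D.Weyl) (c : ℝ) (x : Vn n) :
    D.weylSine c (w x) = LinearMap.det (w : Vn n →ₗ[ℝ] Vn n) * D.weylSine c x := by
  rw [← LinearEquiv.coe_det, ← smul_eq_mul, ← Units.smul_def]
  induction hw using Subgroup.closure_induction generalizing x with
  | mem w hw =>
    obtain ⟨α, hα, hw⟩ := hw
    have hwα : w = (reflIso α).toLinearEquiv :=
      LinearEquiv.ext fun v ↦ (hw v).trans (reflVec_eq_reflIso α v)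
    rw [Units.smul_def, smul_eq_mul, hwα, LinearEquiv.coe_det, det_reflIso (ne_zero_of_mem hα),
      neg_one_mul]
    exact weylSine_reflIso hα c x
  | one => rw [map_one, one_smul, LinearEquiv.coe_one, id]
  | mul v w _ _ hv hw => rw [LinearEquiv.mul_apply, hv, hw, map_mul, mul_smul]
  | inv w _ hw =>
    rw [map_inv, eq_inv_smul_iff, ← hw, ← LinearEquiv.mul_apply, mul_inv_cancel,
      LinearEquiv.coe_one, id]

theorem weylSine_eq_of_smul_sub_eq {c : ℝ} {x y q : Vn n} (hq : q ∈ D.rootLattice)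
    (hxy : c • (y - x) = Real.pi • q) : D.weylSine c y = D.weylSine c x := by
  choose! k hk using fun (α : Vn n) (hα : α ∈ D.Rplus) ↦
    exists_int_inner_coroot (rootLattice_le_P hq) (mem_R_of_pos hα)
  have hsin : ∀ α ∈ D.Rplus, Real.sin (c * ⟪y, coroot α⟫) =
      Real.sin (c * ⟪x, coroot α⟫ + k α * Real.pi) := fun α hα ↦ by
    have hcy : c • y = c • x + Real.pi • q := by rw [← hxy, ← smul_add, add_sub_cancel]
    rw [← hk α hα, mul_comm _ Real.pi, ← real_inner_smul_left, hcy, inner_add_left,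
      real_inner_smul_left, real_inner_smul_left]
  have heven : Even (∑ α ∈ D.Rplus, k α) := by
    obtain ⟨z, hz⟩ := exists_int_sum_pos_inner_coroot_eq_two_mul hq
    rw [Finset.sum_congr rfl hk] at hz
    exact even_iff_two_dvd.mpr ⟨z, by exact_mod_cast hz⟩
  rw [weylSine, Finset.prod_congr rfl hsin, prod_sin_add_int_mul_pi, heven.neg_one_zpow, one_mul,
    weylSine]

end WeylSine

section WeightQuotient

theorem finite_closedBall_inter_P (x : Vn n) (r : ℝ) :
    (Metric.closedBall x r ∩ (D.P : Set (Vn n))).Finite := by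
  have hfin := ZSpan.setFinite_inter
    (basisOfLinearIndependentOfCardEqFinrank' D.fw D.linearIndependent_fw (by simp))
    (Metric.isBounded_closedBall (x := x) (r := r))
  rwa [coe_basisOfLinearIndependentOfCardEqFinrank'] at hfin

theorem exists_forall_norm_sub_le {S : Set D.P} (hS : S.Nonempty) (x : Vn n) :
    ∃ y ∈ S, ∀ z ∈ S, ‖(y : Vn n) - x‖ ≤ ‖(z : Vn n) - x‖ := by
  obtain ⟨y₀, hy₀⟩ := hS
  have hfin : {z ∈ S | ‖(z : Vn n) - x‖ ≤ ‖(y₀ : Vn n) - x‖}.Finite := by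
    refine Set.Finite.of_finite_image ((D.finite_closedBall_inter_P x ‖(y₀ : Vn n) - x‖).subset ?_)
      Subtype.val_injective.injOn
    rintro _ ⟨z, ⟨-, hz⟩, rfl⟩
    exact ⟨mem_closedBall_iff_norm.mpr hz, z.2⟩
  obtain ⟨y, ⟨hyS, hy⟩, hmin⟩ :=
    Set.exists_min_image _ (fun z : D.P ↦ ‖(z : Vn n) - x‖) hfin ⟨y₀, hy₀, le_rfl⟩
  refine ⟨y, hyS, fun z hz ↦ ?_⟩
  rcases le_total ‖(z : Vn n) - x‖ ‖(y₀ : Vn n) - x‖ with h | h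
  · exact hmin z ⟨hz, h⟩
  · exact hy.trans h

variable {D} {N : ℤ}

theorem finite_Qmod (hN : N ≠ 0) : Finite (Qmod D N) := by
  have : Module.Finite ℤ D.P :=
    Module.Finite.iff_fg.mpr (Submodule.fg_span (Set.finite_range D.fw))
  refine Module.finite_of_fg_torsion _ fun q ↦ ⟨⟨N, mem_nonZeroDivisors_of_ne_zero hN⟩, ?_⟩
  induction q using Submodule.Quotient.induction_on with
  | _ x => exact (Submodule.Quotient.mk_eq_zero _).mpr ⟨x, rfl⟩

theorem mk_eq_mk_iff {x y : D.P} :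
    (Submodule.Quotient.mk x : Qmod D N) = Submodule.Quotient.mk y ↔
      ∃ p : D.P, (x : Vn n) - y = (N : ℝ) • (p : Vn n) := by
  rw [Submodule.Quotient.eq]
  refine exists_congr fun p ↦ ?_
  rw [Int.cast_smul_eq_zsmul, eq_comm, Subtype.ext_iff]
  rfl

end WeightQuotient

section Alcove

variable {D} {N : ℤ}

theorem eq_two_add_inner_rho_coroot_hst (hN : (N : ℝ) = 1 + D.h) :
    (N : ℝ) = 2 + ⟪D.rho, coroot D.hst⟫ := by
  rw [hN, h]
  ring

theorem intCast_pos (hN : (N : ℝ) = 1 + D.h) : (0 : ℝ) < N := by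
  linarith [eq_two_add_inner_rho_coroot_hst hN, inner_rho_coroot_pos D.theta_mem]

theorem exists_sub_mem_rootLattice_mk_eq (hN : (N : ℝ) = 1 + D.h) (x z : D.P) :
    ∃ y : D.P, (y : Vn n) - z ∈ D.rootLattice ∧
      (Submodule.Quotient.mk y : Qmod D N) = Submodule.Quotient.mk x := by
  refine ⟨x + N • (z - x), ?_, mk_eq_mk_iff.mpr ⟨z - x, ?_⟩⟩
  · convert h_smul_mem_rootLattice (z - x).2 using 1
    simp only [Submodule.coe_add, Submodule.coe_smul, Submodule.coe_sub]
    rw [← Int.cast_smul_eq_zsmul ℝ, hN]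
    module
  · simp [Int.cast_smul_eq_zsmul]

-- The difference is dominant with `(y - ρ, θ^∨) ≤ 1`, and the only such element of the root
-- lattice is `0`.
theorem eq_rho_of_inner_coroot_pos_of_inner_coroot_hst_lt (hN : (N : ℝ) = 1 + D.h) {y : Vn n}
    (hyρ : y - D.rho ∈ D.rootLattice) (hpos : ∀ i, 0 < ⟪y, coroot (D.sroot i)⟫)
    (hlt : ⟪y, coroot D.hst⟫ < N) : y = D.rho := by
  have hy : y ∈ D.P := sub_add_cancel y D.rho ▸ add_mem (rootLattice_le_P hyρ) D.rho_mem_P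
  have hdom : ∀ i, 0 ≤ ⟪y - D.rho, coroot (D.sroot i)⟫ := by
    intro i
    obtain ⟨z, hz⟩ := mem_P_iff.mp hy i
    have hz1 : 1 ≤ z := by exact_mod_cast hz ▸ hpos i
    rw [inner_sub_left, inner_rho_coroot_sroot, hz, sub_nonneg]
    exact_mod_cast hz1
  have hhst : ⟪y - D.rho, coroot D.hst⟫ ≤ 1 := by
    obtain ⟨z, hz⟩ := exists_int_inner_coroot hy hst_mem_R
    have hzN : z + 1 ≤ N := by exact_mod_cast hz ▸ hlt
    have hzN' : (z : ℝ) + 1 ≤ N := by exact_mod_cast hzN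
    rw [inner_sub_left, hz]
    linarith [eq_two_add_inner_rho_coroot_hst hN]
  by_contra hne
  obtain ⟨β, hβ, h2⟩ := exists_two_le_inner_coroot hyρ (sub_ne_zero.mpr hne)
  linarith [inner_coroot_le_hst hdom hβ]

end Alcove

section SignVector

variable {D} {N : ℤ}

-- Shifting `x` by `N p` shifts the arguments of the sines by `π (h p, α^∨)`, and `h p` lies in the
-- root lattice.
theorem weylSine_eq_of_mk_eq (hN : (N : ℝ) = 1 + D.h) {x y : D.P}
    (hxy : (Submodule.Quotient.mk x : Qmod D N) = Submodule.Quotient.mk y) :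
    D.weylSine (Real.pi * D.h / N) x = D.weylSine (Real.pi * D.h / N) y := by
  obtain ⟨p, hp⟩ := mk_eq_mk_iff.mp hxy
  refine weylSine_eq_of_smul_sub_eq (h_smul_mem_rootLattice p.2) ?_
  rw [hp, smul_smul, smul_smul, div_mul_cancel₀ _ (intCast_pos hN).ne']

theorem weylSine_rho_ne_zero (hN : (N : ℝ) = 1 + D.h) :
    D.weylSine (Real.pi * D.h / N) D.rho ≠ 0 := by
  have hN0 := intCast_pos hN
  refine Finset.prod_ne_zero_iff.mpr fun α hα hsin ↦ ?_
  obtain ⟨m, hm⟩ := Real.sin_eq_zero_iff.mp hsin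
  obtain ⟨k, hk⟩ := exists_int_inner_coroot D.rho_mem_P (mem_R_of_pos hα)
  have hkpos : 0 < k := by exact_mod_cast hk ▸ inner_rho_coroot_pos hα
  have hklt : k < N := by
    have hle := inner_coroot_le_hst (fun i ↦ (inner_rho_coroot_pos (D.sroot_mem i)).le)
      (mem_R_of_pos hα)
    have hkN : (k : ℝ) < N := by linarith [eq_two_add_inner_rho_coroot_hst hN]
    exact_mod_cast hkN
  have hdvd : N ∣ k := by
    refine ⟨k - m, ?_⟩
    have hπ : (m : ℝ) * N = (N - 1) * k := by
      rw [hk] at hm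
      field_simp at hm
      linear_combination hm - k * hN
    have hπ' : m * N = (N - 1) * k := by exact_mod_cast hπ
    linear_combination hπ'
  exact hklt.not_ge (Int.le_of_dvd hkpos hdvd)

theorem exists_isSignVector_apply_rho_ne_zero (hN : (N : ℝ) = 1 + D.h) :
    ∃ f : Qmod D N →₀ ℂ,
      IsSignVector D N f ∧ f (Submodule.Quotient.mk ⟨D.rho, D.rho_mem_P⟩) ≠ 0 := by
  have : Finite (Qmod D N) := finite_Qmod (Int.cast_ne_zero.mp (intCast_pos hN).ne')
  let g : D.P → ℂ := fun x ↦ D.weylSine (Real.pi * D.h / N) x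
  have hg : g.FactorsThrough (Submodule.Quotient.mk : D.P → Qmod D N) := fun x y hxy ↦
    congrArg Complex.ofReal (weylSine_eq_of_mk_eq hN hxy)
  refine ⟨Finsupp.equivFunOnFinite.symm (Function.extend Submodule.Quotient.mk g 0),
    fun w hw wP hwP x ↦ ?_, ?_⟩
  · simp only [Finsupp.equivFunOnFinite_symm_apply_apply, hg.extend_apply, g, hwP,
      weylSine_weyl hw, Complex.ofReal_mul]
  · rw [Finsupp.equivFunOnFinite_symm_apply_apply, hg.extend_apply]
    exact Complex.ofReal_ne_zero.mpr (weylSine_rho_ne_zero hN)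

end SignVector

end RootSystemData

namespace IsSignVector

open RootSystemData

variable {n : ℕ} {D : RootSystemData n} {N : ℤ} {f : Qmod D N →₀ ℂ}

theorem sub {g : Qmod D N →₀ ℂ} (hf : IsSignVector D N f) (hg : IsSignVector D N g) :
    IsSignVector D N (f - g) := fun w hw wP hwP x ↦ by
  rw [Finsupp.sub_apply, hf w hw wP hwP, hg w hw wP hwP, ← mul_sub, Finsupp.sub_apply]

theorem smul (hf : IsSignVector D N f) (c : ℂ) : IsSignVector D N (c • f) :=
  fun w hw wP hwP x ↦ by
  rw [Finsupp.smul_apply, hf w hw wP hwP, smul_eq_mul, mul_left_comm, Finsupp.smul_apply,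
    smul_eq_mul]

theorem apply_mk_eq_neg (hf : IsSignVector D N f)
    {α : Vn n} (hα : α ∈ D.R) {x y : D.P} (k : ℤ)
    (hxy : (y : Vn n) = reflIso α x + (k * N : ℝ) • α) :
    f (Submodule.Quotient.mk y) = -f (Submodule.Quotient.mk x) := by
  have hs : (reflIso α).toLinearEquiv ∈ D.Weyl :=
    Subgroup.subset_closure ⟨α, hα, fun v ↦ (reflVec_eq_reflIso α v).symm⟩
  have hy : (Submodule.Quotient.mk y : Qmod D N) = Submodule.Quotient.mk (reflP hα x) := by
    refine mk_eq_mk_iff.mpr ⟨k • ⟨α, mem_P_of_mem_R hα⟩, ?_⟩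
    rw [hxy, Submodule.coe_smul, ← Int.cast_smul_eq_zsmul ℝ, smul_smul, mul_comm (N : ℝ)]
    exact add_sub_cancel_left _ _
  rw [hy, hf _ hs (reflP hα) (fun _ ↦ rfl) x, det_reflIso (ne_zero_of_mem hα)]
  push_cast
  exact neg_one_mul _

theorem inner_coroot_ne (hf : IsSignVector D N f)
    {y : D.P} (hy : f (Submodule.Quotient.mk y) ≠ 0) {α : Vn n} (hα : α ∈ D.R) (k : ℤ) :
    ⟪(y : Vn n), coroot α⟫ ≠ k * N := fun hwall ↦
  hy <| self_eq_neg.mp <| hf.apply_mk_eq_neg hα k <| by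
    rw [reflIso_apply, hwall, sub_add_cancel]

theorem mul_nonneg_of_forall_norm_sub_le
    (hf : IsSignVector D N f) {y : D.P} (hy : f (Submodule.Quotient.mk y) ≠ 0) {x : Vn n}
    (hyx : (y : Vn n) - x ∈ D.rootLattice)
    (hmin : ∀ z : D.P, (z : Vn n) - x ∈ D.rootLattice → f (Submodule.Quotient.mk z) ≠ 0 →
      ‖(y : Vn n) - x‖ ≤ ‖(z : Vn n) - x‖)
    {α : Vn n} (hα : α ∈ D.R) (k : ℤ) :
    0 ≤ (⟪(y : Vn n), coroot α⟫ - k * N) * (⟪x, coroot α⟫ - k * N) := by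
  have hkN : (k * N : ℝ) • α ∈ D.rootLattice := by
    rw [← Int.cast_mul, Int.cast_smul_eq_zsmul]
    exact zsmul_mem (mem_rootLattice_of_mem_R hα) _
  let z : D.P := ⟨reflIso α y + (k * N : ℝ) • α,
    add_mem (reflIso_mem_P y.2 hα) (rootLattice_le_P hkN)⟩
  refine mul_nonneg_of_norm_sub_le_norm_reflIso (ne_zero_of_mem hα) (hmin z ?_ ?_)
  · have hz : (z : Vn n) - x = y - x - ⟪(y : Vn n), coroot α⟫ • α + (k * N : ℝ) • α := by
      simp only [z, reflIso_apply]
      abel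
    exact hz ▸ add_mem (sub_mem hyx (inner_coroot_smul_mem_rootLattice y.2 hα)) hkN
  · rwa [hf.apply_mk_eq_neg (x := y) hα k rfl, neg_ne_zero]

theorem eq_zero_of_apply_rho_eq_zero
    (hf : IsSignVector D N f) (hN : (N : ℝ) = 1 + D.h)
    (hrho : f (Submodule.Quotient.mk ⟨D.rho, D.rho_mem_P⟩) = 0) : f = 0 := by
  by_contra hne
  obtain ⟨q, hq⟩ := Finsupp.ne_iff.mp hne
  obtain ⟨x, rfl⟩ := Submodule.Quotient.mk_surjective _ q
  obtain ⟨y₀, hy₀ρ, hy₀⟩ := exists_sub_mem_rootLattice_mk_eq hN x ⟨D.rho, D.rho_mem_P⟩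
  obtain ⟨y, ⟨hyρ, hy⟩, hmin⟩ := D.exists_forall_norm_sub_le
    (S := {y : D.P | (y : Vn n) - D.rho ∈ D.rootLattice ∧ f (Submodule.Quotient.mk y) ≠ 0})
    ⟨y₀, hy₀ρ, hy₀ ▸ hq⟩ D.rho
  have hside {α : Vn n} (hα : α ∈ D.Rplus) (k : ℤ) := hf.mul_nonneg_of_forall_norm_sub_le hy hyρ
    (fun z hzρ hz ↦ hmin z ⟨hzρ, hz⟩) (mem_R_of_pos hα) k
  have hpos (i : Fin n) : 0 < ⟪(y : Vn n), coroot (D.sroot i)⟫ := by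
    have h0 := hside (D.sroot_mem i) 0
    have hne := hf.inner_coroot_ne hy (D.sroot_mem_R i) 0
    simp only [Int.cast_zero, zero_mul, sub_zero, inner_rho_coroot_sroot, mul_one] at h0 hne
    exact h0.lt_of_ne' hne
  have hlt : ⟪(y : Vn n), coroot D.hst⟫ < N := by
    have h1 := hside D.theta_mem 1
    have hne := hf.inner_coroot_ne hy hst_mem_R 1
    rw [Int.cast_one, one_mul] at h1 hne
    refine lt_of_le_of_ne ?_ hne
    have hρN := eq_two_add_inner_rho_coroot_hst hN
    nlinarith
  obtain rfl : y = ⟨D.rho, D.rho_mem_P⟩ :=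
    Subtype.ext (eq_rho_of_inner_coroot_pos_of_inner_coroot_hst_lt hN hyρ hpos hlt)
  exact hy hrho

end IsSignVector

/-- set `N = 1 + h`.  The sign character of `W` occurs with multiplicity
exactly one in the permutation representation `ℂ[P/NP]`: the subspace
`{v ∈ ℂ[P/NP] : w·v = sgn(w)·v for all w ∈ W}` is one-dimensional. -/
theorem stmt_9 {n : ℕ} (D : RootSystemData n) (N : ℤ) (hN : (N : ℝ) = 1 + D.h) :
    ∃ f₀ : Qmod D N →₀ ℂ, IsSignVector D N f₀ ∧ f₀ ≠ 0 ∧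
      ∀ f : Qmod D N →₀ ℂ, IsSignVector D N f → ∃ c : ℂ, f = c • f₀ := by
  obtain ⟨f₀, hf₀, hrho⟩ := RootSystemData.exists_isSignVector_apply_rho_ne_zero hN
  refine ⟨f₀, hf₀, fun hzero ↦ hrho (by rw [hzero, Finsupp.zero_apply]), fun f hf ↦ ?_⟩
  let ρ : Qmod D N := Submodule.Quotient.mk ⟨D.rho, D.rho_mem_P⟩
  refine ⟨f ρ / f₀ ρ, sub_eq_zero.mp ?_⟩
  refine (hf.sub (hf₀.smul (f ρ / f₀ ρ))).eq_zero_of_apply_rho_eq_zero hN ?_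
  rw [Finsupp.sub_apply, Finsupp.smul_apply, smul_eq_mul, div_mul_cancel₀ _ hrho, sub_self]
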